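/- Let G be a connected graph of order n ≥ 2 and let H be any graph, and let β(H) denote the number of isolated vertices of H. If n > β(H) ≥ 2, then pd(G⊙H) ≥ β(H) + 1. -/

import Mathlib

open SimpleGraph

/-- The corona product `G ⊙ H`: one copy of `G`, one copy of `H` for each vertex of `G`,
with the `i`-th vertex of `G` joined to every vertex of the `i`-th copy of `H`. -/
def corona {α β : Type*} (G : SimpleGraph α) (H : SimpleGraph β) :
    SimpleGraph (α ⊕ α × β) :=
  SimpleGraph.fromRel (fun x y =>
    match x, y with
    | Sum.inl a, Sum.inl b => G.Adj a b
    | Sum.inl a, Sum.inr iu => a = iu.1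
    | Sum.inr iu, Sum.inr jw => iu.1 = jw.1 ∧ H.Adj iu.2 jw.2
    | _, _ => False)

/-- The distance from a vertex to a set of vertices: `d(v,A) = min_{u ∈ A} d(v,u)`. -/
noncomputable def setDist {α : Type*} (G : SimpleGraph α) (v : α) (A : Set α) : ℕ :=
  sInf (G.dist v '' A)

/-- `S` is a resolving set for `G`: distinct vertices have distinct metric representations. -/
def IsResolvingSet {α : Type*} (G : SimpleGraph α) (S : Set α) : Prop :=
  ∀ u v : α, (∀ w ∈ S, G.dist u w = G.dist v w) → u = v

/-- The metric dimension of `G`: minimum cardinality of a resolving set. -/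
noncomputable def metricDim {α : Type*} (G : SimpleGraph α) : ℕ :=
  sInf {k | ∃ S : Set α, IsResolvingSet G S ∧ S.ncard = k}

/-- A family of sets is a resolving partition for `G` if it is a partition of the vertex set
into nonempty cells and distinct vertices have distinct partition representations. -/
def IsResolvingPartition {α : Type*} (G : SimpleGraph α) (P : Set (Set α)) : Prop :=
  (∀ A ∈ P, A.Nonempty) ∧ (∀ v : α, ∃! A : Set α, A ∈ P ∧ v ∈ A) ∧
    ∀ u v : α, (∀ A ∈ P, setDist G u A = setDist G v A) → u = v

/-- The partition dimension of `G`: minimum number of cells in a resolving partition. -/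
noncomputable def partitionDim {α : Type*} (G : SimpleGraph α) : ℕ :=
  sInf {t | ∃ P : Set (Set α), IsResolvingPartition G P ∧ P.ncard = t}

/-- `c(H)`: the maximum cardinality of a connected component of `H` which is isomorphic to a
complete graph (i.e. whose vertex set is a clique). -/
noncomputable def maxCompleteComp {β : Type*} (H : SimpleGraph β) : ℕ :=
  sSup {k | ∃ C : H.ConnectedComponent, H.IsClique C.supp ∧ C.supp.ncard = k}

/-- `β(H)`: the number of isolated vertices of `H`. -/
noncomputable def numIsolated {β : Type*} (H : SimpleGraph β) : ℕ :=
  Set.ncard {v : β | ∀ u, ¬ H.Adj v u}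

/-- `α(H)`: the number of connected components of `H` of order greater than one. -/
noncomputable def numBigComp {β : Type*} (H : SimpleGraph β) : ℕ :=
  Set.ncard {C : H.ConnectedComponent | 1 < C.supp.ncard}

/-!
Two mechanisms force a resolving partition to have many cells. Vertices with the same neighbours are
equidistant from every other vertex, so they lie in different cells. In a connected graph, a vertex
adjacent to a member of every cell is at distance `0` from its own cell and at distance `1` from the
others, so no cell contains two such vertices.

In `G ⊙ H` the isolated vertices of a copy of `H` become leaves at a common vertex of `G`, hence
lie in different cells. If there were at most `β(H)` cells, these leaves would meet all of them.
Every vertex of `G` would then be adjacent to a member of every cell, leaving room for at most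
`β(H)` vertices of `G`.
-/

section Transversal

variable {α : Type*} {P : Set (Set α)} {S : Set α}

lemma encard_le_encard_inter_nonempty (hcover : S ⊆ ⋃₀ P)
    (hS : ∀ A ∈ P, (A ∩ S).Subsingleton) :
    S.encard ≤ {A ∈ P | (A ∩ S).Nonempty}.encard := by
  have exists_cell : ∀ v ∈ S, ∃ A ∈ P, v ∈ A := hcover
  choose! cell hcell hmem using exists_cell
  refine Set.encard_le_encard_of_injOn (f := cell)
    (fun v hv => ⟨hcell v hv, v, hmem v hv, hv⟩) fun u hu v hv huv => ?_
  exact hS (cell u) (hcell u hu) ⟨hmem u hu, hu⟩ ⟨huv ▸ hmem v hv, hv⟩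

lemma encard_le_encard_of_inter_subsingleton (hcover : S ⊆ ⋃₀ P)
    (hS : ∀ A ∈ P, (A ∩ S).Subsingleton) : S.encard ≤ P.encard :=
  (encard_le_encard_inter_nonempty hcover hS).trans (Set.encard_le_encard (Set.sep_subset _ _))

lemma inter_nonempty_of_encard_le (hP : P.Finite) (hcover : S ⊆ ⋃₀ P)
    (hS : ∀ A ∈ P, (A ∩ S).Subsingleton) (hcard : P.encard ≤ S.encard) {A : Set α} (hA : A ∈ P) :
    (A ∩ S).Nonempty := by
  have hall : {A ∈ P | (A ∩ S).Nonempty} = P :=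
    hP.eq_of_subset_of_encard_le' (Set.sep_subset _ _)
      (hcard.trans (encard_le_encard_inter_nonempty hcover hS))
  exact (hall.ge hA).2

end Transversal

section Distance

variable {α : Type*} {K : SimpleGraph α} {u v x : α} {A : Set α}

lemma edist_le_edist_of_neighborSet_subset (h : K.neighborSet u ⊆ K.neighborSet v) (hx : x ≠ u) :
    K.edist v x ≤ K.edist u x := by
  refine le_iInf fun p => ?_
  cases p with
  | nil => exact absurd rfl hx
  | cons huy q => exact edist_le (.cons (h huy) q)

lemma dist_eq_dist_of_neighborSet_eq (h : K.neighborSet u = K.neighborSet v) (hu : x ≠ u)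
    (hv : x ≠ v) : K.dist u x = K.dist v x :=
  congrArg ENat.toNat <| le_antisymm (edist_le_edist_of_neighborSet_subset h.ge hv)
    (edist_le_edist_of_neighborSet_subset h.le hu)

lemma setDist_eq_zero_of_mem (hv : v ∈ A) : setDist K v A = 0 :=
  Nat.sInf_eq_zero.2 (Or.inl ⟨v, hv, dist_self⟩)

lemma setDist_eq_one_of_adj (hK : K.Connected) (hv : v ∉ A) (hx : x ∈ A) (hvx : K.Adj v x) :
    setDist K v A = 1 := by
  refine IsLeast.csInf_eq ⟨⟨x, hx, dist_eq_one_iff_adj.2 hvx⟩, ?_⟩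
  rintro _ ⟨y, hy, rfl⟩
  exact hK.pos_dist_of_ne (ne_of_mem_of_not_mem hy hv).symm

lemma setDist_eq_setDist_of_neighborSet_eq (h : K.neighborSet u = K.neighborSet v) (hu : u ∉ A)
    (hv : v ∉ A) : setDist K u A = setDist K v A :=
  congrArg sInf <| Set.image_congr fun _ hx =>
    dist_eq_dist_of_neighborSet_eq h (ne_of_mem_of_not_mem hx hu) (ne_of_mem_of_not_mem hx hv)

end Distance

namespace IsResolvingPartition

variable {α : Type*} {K : SimpleGraph α} {P : Set (Set α)} {S T A : Set α} {u v : α}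

lemma subset_sUnion (hP : IsResolvingPartition K P) (S : Set α) : S ⊆ ⋃₀ P :=
  fun v _ => (hP.2.1 v).exists

lemma eq_of_setDist_eq (hP : IsResolvingPartition K P) (hA : A ∈ P) (hu : u ∈ A) (hv : v ∈ A)
    (h : ∀ B ∈ P, u ∉ B → v ∉ B → setDist K u B = setDist K v B) : u = v := by
  refine hP.2.2 u v fun B hB => ?_
  obtain rfl | hBA := eq_or_ne B A
  · rw [setDist_eq_zero_of_mem hu, setDist_eq_zero_of_mem hv]
  · exact h B hB (fun huB => hBA ((hP.2.1 u).unique ⟨hB, huB⟩ ⟨hA, hu⟩))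
      fun hvB => hBA ((hP.2.1 v).unique ⟨hB, hvB⟩ ⟨hA, hv⟩)

lemma inter_subsingleton_of_neighborSet_eq (hP : IsResolvingPartition K P)
    (hT : ∀ u ∈ T, ∀ v ∈ T, K.neighborSet u = K.neighborSet v) (hA : A ∈ P) :
    (A ∩ T).Subsingleton :=
  fun u hu v hv => hP.eq_of_setDist_eq hA hu.1 hv.1 fun _ _ =>
    setDist_eq_setDist_of_neighborSet_eq (hT u hu.2 v hv.2)

lemma inter_subsingleton_of_forall_exists_adj (hP : IsResolvingPartition K P) (hK : K.Connected)
    (hS : ∀ s ∈ S, ∀ B ∈ P, ∃ x ∈ B, K.Adj s x) (hA : A ∈ P) : (A ∩ S).Subsingleton := by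
  refine fun u hu v hv => hP.eq_of_setDist_eq hA hu.1 hv.1 fun B hB huB hvB => ?_
  obtain ⟨x, hx, hux⟩ := hS u hu.2 B hB
  obtain ⟨y, hy, hvy⟩ := hS v hv.2 B hB
  rw [setDist_eq_one_of_adj hK huB hx hux, setDist_eq_one_of_adj hK hvB hy hvy]

theorem lt_encard_of_neighborSet_eq (hP : IsResolvingPartition K P) (hK : K.Connected) {k : ℕ∞}
    (hk : k < S.encard)
    (hS : ∀ s ∈ S, ∃ T ⊆ K.neighborSet s,
      k ≤ T.encard ∧ ∀ u ∈ T, ∀ v ∈ T, K.neighborSet u = K.neighborSet v) :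
    k < P.encard := by
  by_contra! hPk
  have hfin : P.Finite := Set.encard_lt_top_iff.1 (hPk.trans_lt (hk.trans_le le_top))
  have hadj : ∀ s ∈ S, ∀ A ∈ P, ∃ x ∈ A, K.Adj s x := fun s hs A hA => by
    obtain ⟨T, hTs, hkT, hT⟩ := hS s hs
    obtain ⟨x, hxA, hxT⟩ := inter_nonempty_of_encard_le hfin (hP.subset_sUnion T)
      (fun _ => hP.inter_subsingleton_of_neighborSet_eq hT) (hPk.trans hkT) hA
    exact ⟨x, hxA, hTs hxT⟩
  have hSP : S.encard ≤ P.encard := encard_le_encard_of_inter_subsingleton (hP.subset_sUnion S)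
    fun _ => hP.inter_subsingleton_of_forall_exists_adj hK hadj
  exact (hk.trans_le (hSP.trans hPk)).false

end IsResolvingPartition

section PartitionDim

variable {α : Type*} {K : SimpleGraph α}

lemma isResolvingPartition_range_singleton (hK : K.Connected) :
    IsResolvingPartition K (Set.range ({·} : α → Set α)) := by
  refine ⟨?_, fun v => ⟨{v}, ⟨⟨v, rfl⟩, rfl⟩, ?_⟩, fun u v h => ?_⟩
  · rintro _ ⟨v, rfl⟩
    exact Set.singleton_nonempty v
  · rintro _ ⟨⟨w, rfl⟩, hw⟩
    rw [Set.mem_singleton_iff.1 hw]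
  · simpa [setDist, hK.dist_eq_zero_iff] using h {v} ⟨v, rfl⟩

-- `partitionDim` counts cells with `Set.ncard`, whose value on infinite sets is `0`.
lemma exists_isResolvingPartition_encard_eq_partitionDim [Finite α] (hK : K.Connected) :
    ∃ P, IsResolvingPartition K P ∧ P.encard = partitionDim K := by
  obtain ⟨P, hP, hcard⟩ : partitionDim K ∈ {t | ∃ P, IsResolvingPartition K P ∧ P.ncard = t} :=
    Nat.sInf_mem ⟨_, _, isResolvingPartition_range_singleton hK, rfl⟩
  exact ⟨P, hP, by rw [← hcard, P.toFinite.cast_ncard_eq]⟩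

end PartitionDim

section Corona

variable {V W : Type*} {G : SimpleGraph V} {H : SimpleGraph W} {a b : V} {p q : V × W} {w : W}

@[simp]
lemma corona_adj_inl_inl : (corona G H).Adj (Sum.inl a) (Sum.inl b) ↔ G.Adj a b := by
  simpa [corona, G.adj_comm b a] using G.ne_of_adj

@[simp]
lemma corona_adj_inl_inr : (corona G H).Adj (Sum.inl a) (Sum.inr p) ↔ a = p.1 := by
  simp [corona]

@[simp]
lemma corona_adj_inr_inl : (corona G H).Adj (Sum.inr p) (Sum.inl a) ↔ a = p.1 := by
  simp [corona]

@[simp]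
lemma corona_adj_inr_inr :
    (corona G H).Adj (Sum.inr p) (Sum.inr q) ↔ p.1 = q.1 ∧ H.Adj p.2 q.2 := by
  simp only [corona, fromRel_adj, H.adj_comm q.2, eq_comm (a := q.1), or_self, ne_eq,
    Sum.inr.injEq, and_iff_right_iff_imp]
  rintro ⟨-, h⟩ rfl
  exact H.irrefl h

lemma corona_connected (hG : G.Connected) : (corona G H).Connected := by
  obtain ⟨a₀⟩ := hG.nonempty
  let inlHom : G →g corona G H := ⟨Sum.inl, corona_adj_inl_inl.2⟩
  have reachable_inl (b : V) : (corona G H).Reachable (Sum.inl a₀) (Sum.inl b) :=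
    (hG a₀ b).map inlHom
  refine (connected_iff_exists_forall_reachable _).2 ⟨Sum.inl a₀, ?_⟩
  rintro (b | p)
  · exact reachable_inl b
  · exact (reachable_inl p.1).trans (corona_adj_inl_inr.2 rfl).reachable

lemma neighborSet_corona_inr_of_isIsolated (hw : H.IsIsolated w) :
    (corona G H).neighborSet (Sum.inr (a, w)) = {Sum.inl a} := by
  ext (b | p)
  · simp
  · simp [hw p.2]

end Corona

theorem stmt12_general {V W : Type*} {G : SimpleGraph V} {H : SimpleGraph W} (hG : G.Connected)
    (hcard : {w | H.IsIsolated w}.encard < ENat.card V) {P : Set (Set (V ⊕ V × W))}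
    (hP : IsResolvingPartition (corona G H) P) : {w | H.IsIsolated w}.encard < P.encard := by
  refine hP.lt_encard_of_neighborSet_eq (corona_connected hG) (S := Set.range Sum.inl) ?_ ?_
  · rwa [← Set.image_univ, Sum.inl_injective.encard_image, Set.encard_univ]
  · rintro _ ⟨a, rfl⟩
    have leaf_injective : Function.Injective fun w : W => (Sum.inr (a, w) : V ⊕ V × W) :=
      Sum.inr_injective.comp (Prod.mk_right_injective a)
    refine ⟨(fun w => Sum.inr (a, w)) '' {w | H.IsIsolated w}, ?_,
      (leaf_injective.encard_image _).ge, ?_⟩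
    · rintro _ ⟨w, -, rfl⟩
      simp
    · rintro _ ⟨w, hw, rfl⟩ _ ⟨w', hw', rfl⟩
      rw [neighborSet_corona_inr_of_isIsolated hw, neighborSet_corona_inr_of_isIsolated hw']

/-- Let `G` be a connected graph of order `n ≥ 2` and `H` any graph, with `β(H)`
the number of isolated vertices of `H`. If `n > β(H) ≥ 2`, then `pd(G⊙H) ≥ β(H) + 1`. -/
theorem stmt12 {V W : Type*} [Fintype V] [Fintype W] (G : SimpleGraph V) (H : SimpleGraph W)
    (hG : G.Connected) (n : ℕ) (hn : Fintype.card V = n) (h₁ : 2 ≤ n)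
    (h₂ : n > numIsolated H) (h₃ : 2 ≤ numIsolated H) :
    partitionDim (corona G H) ≥ numIsolated H + 1 := by
  have hβ : {w | H.IsIsolated w}.encard = numIsolated H := (Set.toFinite _).cast_ncard_eq.symm
  obtain ⟨P, hP, hdim⟩ :=
    exists_isResolvingPartition_encard_eq_partitionDim (corona_connected (H := H) hG)
  have hlt := stmt12_general hG (by simpa [hβ, hn] using h₂) hP
  rw [hβ, hdim] at hlt
  exact_mod_cast hlt
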